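/- arXiv:1203.6766 — 2 statements merged into one kernel-verified Lean document; each statement's English description precedes it below -/
import Mathlib

section
/- Let f : 𝒪_F → E be a function of class C^r. Then the family of bounded functions (D_i f)_{i ∈ I_{≤[r]}} appearing in the definition of class C^r is unique: if (F_i)_{i∈I_{≤[r]}} and (G_i)_{i∈I_{≤[r]}} are two families of bounded functions 𝒪_F → E both satisfying the defining condition of class C^r for f, then F_i = G_i for every i ∈ I_{≤[r]}. -/
/-!
Setting (cf. the paper's notations): `O` plays the role of the ring of integers `𝒪_F` of a
finite extension `F` of `ℚ_p`, `E` is the coefficient field (a finite extension of `ℚ_p`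
with its p-adic absolute value, normalized by `|x| = p^{-val_F(x)}`, `val_F(p) = [F:ℚ_p]`),
`S` is the (finite) set of `ℚ_p`-algebra embeddings `F ↪ E`, restricted here to `O`,
`ν : O → ℝ` is the absolute value on `O` (the common restriction of the norm of `E` along any
embedding), `ϖ` is a fixed uniformizer with `ν ϖ = q⁻¹` where `q = p^f` is the cardinality
of the residue field, and `u * ϖ ^ e = p` records the ramification index `e`.
-/

open scoped Classical

noncomputable section

namespace CrPaper

structure Setting (S O E : Type*) [Fintype S] [CommRing O] [NormedField E] where
  q : ℝ
  p : ℕ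
  fdeg : ℕ
  hp : p.Prime
  hfdeg : 0 < fdeg
  hq : q = (p : ℝ) ^ fdeg
  emb : S → O →+* E
  emb_inj : ∀ s, Function.Injective (emb s)
  emb_distinct : Function.Injective emb
  ν : O → ℝ
  norm_emb : ∀ (s) (z : O), ‖emb s z‖ = ν z
  norm_le_one : ∀ (s) (z : O), ‖emb s z‖ ≤ 1
  norm_add_max : ∀ x y : E, ‖x + y‖ ≤ max ‖x‖ ‖y‖
  ϖ : O
  ν_ϖ : ν ϖ = q⁻¹
  mem_ball_iff : ∀ (y : O) (n : ℕ), (∃ z, y = ϖ ^ n * z) ↔ ν y ≤ q⁻¹ ^ n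
  ram : ∃ (e : ℕ) (u : O), 0 < e ∧ IsUnit u ∧ u * ϖ ^ e = (p : O)

variable {S O E : Type*} [Fintype S] [DecidableEq S] [CommRing O] [IsDomain O]
  [NormedField E] [CompleteSpace E] [CharZero E]

/-- The total weight `|i| = ∑ i_σ` of a multi-index. -/
def wt (i : S → ℕ) : ℕ := ∑ s, i s

/-- `i! = ∏ i_σ!` for a multi-index. -/
def mfact (i : S → ℕ) : ℕ := ∏ s, (i s).factorial

/-- The (finite) set `I_{≤N}` of multi-indices of total weight `≤ N`. -/
def Idx (S : Type*) [Fintype S] [DecidableEq S] (N : ℕ) : Finset (S → ℕ) :=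
  (Fintype.piFinset fun _ : S => Finset.range (N + 1)).filter fun i => wt i ≤ N

/-- `z^i = ∏_σ σ(z)^{i_σ}`. -/
def mpow (St : Setting S O E) (z : O) (i : S → ℕ) : E := ∏ s, St.emb s z ^ i s

/-- The Taylor remainder `ε_{f,N}(x,y) = f(x+y) − ∑_{|i|≤N} D_i f(x) y^i / i!`. -/
def epsTay (St : Setting S O E) (N : ℕ) (f : O → E) (D : (S → ℕ) → O → E) (x y : O) : E :=
  f (x + y) - ∑ i ∈ Idx S N, D i x * mpow St y i / (mfact i : E)

/-- `f` is of class `C^r` with the family of bounded functions `D` witnessing the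
definition: all `D_i` (`|i| ≤ ⌊r⌋`) are bounded and
`C_{f,r}(h) = sup_{x ∈ O, y ∈ ϖ^h O} |ε_{f,⌊r⌋}(x,y)| q^{rh} → 0` as `h → ∞`. -/
def IsCrWith (St : Setting S O E) (r : ℝ) (f : O → E) (D : (S → ℕ) → O → E) : Prop :=
  (∀ i ∈ Idx S ⌊r⌋₊, ∃ C : ℝ, ∀ x : O, ‖D i x‖ ≤ C) ∧
  ∀ ε : ℝ, 0 < ε → ∃ M : ℕ, ∀ h : ℕ, M ≤ h → ∀ x z : O,
    ‖epsTay St ⌊r⌋₊ f D x (St.ϖ ^ h * z)‖ * St.q ^ (r * (h : ℝ)) ≤ ε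

/-- `f` is of class `C^r`. -/
def IsCr (St : Setting S O E) (r : ℝ) (f : O → E) : Prop :=
  ∃ D, IsCrWith St r f D

/-- The `C^r`-norm of `f` (relative to the — unique — family `D`):
`max( sup_{i,x} |D_i f(x)/i!| , sup_{x,y} |ε_{f,⌊r⌋}(x,y)|/|y|^r )`. -/
def CrNorm (St : Setting S O E) (r : ℝ) (f : O → E) (D : (S → ℕ) → O → E) : ℝ :=
  max (⨆ i : (Idx S ⌊r⌋₊), ⨆ x : O, ‖D i.1 x / (mfact i.1 : E)‖)
      (⨆ x : O, ⨆ y : O, ‖epsTay St ⌊r⌋₊ f D x y‖ / St.ν y ^ r)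

/-!
At a fixed point `x`, the difference of two Taylor expansions is a polynomial
`Q(y) = ∑ A_i y^i` in the conjugates `σ(y)`, and it is `o(q^{-rh})` along `ϖ^h z` for every `z`.
The embeddings are algebraically independent (by Dedekind their values span `E^S`, and a polynomial
vanishing on an additive submonoid vanishes on its span), so the characters `z ↦ z^i` are distinct
and, by Dedekind again, for each `i` there are finitely many coefficients `c_z` with
`∑_z c_z z^j = δ_{ij}` for all `|j| ≤ [r]`. Since `(ϖ^h z)^j = (ϖ^h)^j z^j`, this gives
`A_i (ϖ^h)^i = ∑_z c_z Q(ϖ^h z) = o(q^{-rh})`, whereas `|(ϖ^h)^i| = q^{-h|i|} ≥ q^{-rh}`; hence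
`A_i = 0`.
-/

section AlgebraicIndependence

open Function MvPolynomial

theorem eval_eq_zero_of_mem_span {ι K : Type*} [CommRing K] [IsDomain K] [CharZero K]
    {A : AddSubmonoid (ι → K)} {P : MvPolynomial ι K} (hP : ∀ a ∈ A, eval a P = 0)
    {w : ι → K} (hw : w ∈ Submodule.span K (A : Set (ι → K))) : eval w P = 0 := by
  obtain ⟨c, hcA, rfl⟩ := Submodule.mem_span_set.mp hw
  -- Once the scalars `c v` become variables, `P` vanishes at all tuples of natural numbers.
  let Q : MvPolynomial (ι → K) K := bind₁ (fun s => ∑ v ∈ c.support, X v * C (v s)) P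
  have eval_Q (n : (ι → K) → K) : eval n Q = eval (∑ v ∈ c.support, n v • v) P := by
    simp only [Q, ← coe_aeval_eq_eval, RingHom.coe_coe, aeval_bind₁]
    congr 2
    ext s
    simp
  have hQ : Q = 0 := by
    refine funext_set (fun _ => Set.range ((↑) : ℕ → K))
      (fun _ => Set.infinite_range_of_injective Nat.cast_injective) fun n hn => ?_
    choose m hm using fun v => hn v trivial
    obtain rfl : (fun v => (m v : K)) = n := _root_.funext hm
    rw [eval_Q, map_zero]
    refine hP _ (sum_mem fun v hv => ?_)
    rw [Nat.cast_smul_eq_nsmul]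
    exact nsmul_mem (hcA hv) _
  exact (eval_Q c).symm.trans (by rw [hQ, map_zero])

variable {ι R K : Type*} [Finite ι]

theorem span_range_ringHom_eq_top [NonAssocSemiring R] [Field K] {σ : ι → R →+* K}
    (hσ : Injective σ) : Submodule.span K (Set.range fun z s => σ s z) = ⊤ :=
  span_flip_eq_top_iff_linearIndependent.mpr <|
    (linearIndependent_monoidHom R K).comp (fun s => (σ s : R →* K)) <|
      RingHom.coe_monoidHom_injective.comp hσ

theorem algebraicIndependent_ringHom [NonAssocSemiring R] [Field K] [CharZero K]
    {σ : ι → R →+* K} (hσ : Injective σ) :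
    AlgebraicIndependent K (fun s => (σ s : R → K)) := by
  refine algebraicIndependent_iff.mpr fun P hP => MvPolynomial.funext fun w => ?_
  let values : R →+ (ι → K) := AddMonoidHom.pi fun s => (σ s : R →+ K)
  rw [map_zero]
  refine eval_eq_zero_of_mem_span (A := AddMonoidHom.mrange values) ?_ ?_
  · rintro _ ⟨z, rfl⟩
    calc eval (values z) P = Pi.evalAlgHom K (fun _ => K) z (aeval (fun s => ⇑(σ s)) P) := by
          rw [comp_aeval_apply]; rfl
      _ = 0 := by rw [hP, map_zero]
  · rw [AddMonoidHom.coe_mrange]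
    exact span_range_ringHom_eq_top hσ ▸ Submodule.mem_top

end AlgebraicIndependence

section Characters

open Function Filter Topology

/-- The monomial character `z ↦ z^i = ∏ s, σ s z ^ i s` attached to a family `σ` of ring
homomorphisms and a multi-index `i`. -/
def monomialChar {ι R K : Type*} [Fintype ι] [NonAssocSemiring R] [CommSemiring K]
    (σ : ι → R →+* K) (i : ι → ℕ) : R →* K :=
  ∏ s, (σ s : R →* K) ^ i s

theorem monomialChar_apply {ι R K : Type*} [Fintype ι] [NonAssocSemiring R] [CommSemiring K]
    (σ : ι → R →+* K) (i : ι → ℕ) (z : R) : monomialChar σ i z = ∏ s, σ s z ^ i s := by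
  simp [monomialChar]

theorem monomialChar_injective {ι R K : Type*} [Fintype ι] [NonAssocSemiring R] [Field K]
    [CharZero K] {σ : ι → R →+* K} (hσ : Injective σ) : Injective (monomialChar σ) := by
  intro i j hij
  have haeval : ∀ k : ι → ℕ, MvPolynomial.aeval (fun s => (σ s : R → K))
      (MvPolynomial.monomial (Finsupp.equivFunOnFinite.symm k) (1 : K)) = monomialChar σ k := by
    intro k
    ext z
    simp [MvPolynomial.aeval_monomial, Finsupp.prod_fintype, monomialChar_apply]
  have h := algebraicIndependent_ringHom hσ ((haeval i).trans (hij ▸ (haeval j).symm))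
  exact Finsupp.equivFunOnFinite.symm.injective
    (MvPolynomial.monomial_left_injective one_ne_zero h)

theorem exists_dual_of_linearIndependent {ι X K : Type*} [Finite ι] [Field K] {φ : ι → X → K}
    (hφ : LinearIndependent K φ) (w : ι → K) :
    ∃ c : X →₀ K, ∀ i, c.sum (fun z b => b * φ i z) = w i := by
  have hw : w ∈ Submodule.span K (Set.range (flip φ)) :=
    span_flip_eq_top_iff_linearIndependent.mpr hφ ▸ Submodule.mem_top
  obtain ⟨c, rfl⟩ := Finsupp.mem_span_range_iff_exists_finsupp.mp hw
  exact ⟨c, fun i => by simp [Finsupp.sum, flip]⟩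

theorem exists_sum_translates_eq_coeff_mul {ι M K : Type*} [Monoid M] [Field K] {χ : ι → M →* K}
    (hχ : Injective χ) (I : Finset ι) {j : ι} (hj : j ∈ I) :
    ∃ c : M →₀ K, ∀ (a : ι → K) (y : M),
      c.sum (fun z b => b * ∑ i ∈ I, a i * χ i (y * z)) = a j * χ j y := by
  have hli : LinearIndependent K (fun i : I => (χ i : M → K)) :=
    (linearIndependent_monoidHom M K).comp (fun i : I => χ i)
      (hχ.comp Subtype.val_injective)
  obtain ⟨c, hc⟩ := exists_dual_of_linearIndependent hli (Pi.single ⟨j, hj⟩ 1)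
  refine ⟨c, fun a y => ?_⟩
  calc c.sum (fun z b => b * ∑ i ∈ I, a i * χ i (y * z))
      = ∑ i : I, a i * χ i y * c.sum (fun z b => b * χ i z) := by
        simp only [Finsupp.sum, Finset.mul_sum, map_mul]
        rw [Finset.sum_comm, ← Finset.sum_coe_sort I]
        exact Finset.sum_congr rfl fun i _ => Finset.sum_congr rfl fun z _ => by ring
    _ = a j * χ j y := by simp [hc, Pi.single_apply]

theorem eq_zero_of_tendsto_norm_sum_char {α ι M K : Type*} [Monoid M] [NormedField K]
    {l : Filter α} [l.NeBot] {χ : ι → M →* K} (hχ : Injective χ) {I : Finset ι} {a : ι → K}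
    {u : α → M} {w : α → ℝ}
    (hlim : ∀ z, Tendsto (fun t => ‖∑ i ∈ I, a i * χ i (u t * z)‖ * w t) l (𝓝 0))
    {j : ι} (hj : j ∈ I) (hw : ∀ t, 1 ≤ ‖χ j (u t)‖ * w t) : a j = 0 := by
  obtain ⟨c, hc⟩ := exists_sum_translates_eq_coeff_mul hχ I hj
  let Q : M → K := fun y => ∑ i ∈ I, a i * χ i y
  have hbound : ∀ t, ‖a j‖ ≤ ∑ z ∈ c.support, ‖c z‖ * (‖Q (u t * z)‖ * w t) := by
    intro t
    have hwt : 0 ≤ w t := (pos_of_mul_pos_right (one_pos.trans_le (hw t)) (norm_nonneg _)).le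
    calc ‖a j‖ ≤ ‖a j‖ * (‖χ j (u t)‖ * w t) := le_mul_of_one_le_right (norm_nonneg _) (hw t)
      _ = ‖c.sum fun z b => b * Q (u t * z)‖ * w t := by rw [hc, norm_mul, mul_assoc]
      _ ≤ (∑ z ∈ c.support, ‖c z * Q (u t * z)‖) * w t := by
        gcongr
        exact norm_sum_le _ _
      _ = ∑ z ∈ c.support, ‖c z‖ * (‖Q (u t * z)‖ * w t) := by
        simp only [Finset.sum_mul, norm_mul, mul_assoc]
  have hzero : Tendsto (fun t => ∑ z ∈ c.support, ‖c z‖ * (‖Q (u t * z)‖ * w t)) l (𝓝 0) := by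
    simpa only [mul_zero, Finset.sum_const_zero] using
      tendsto_finsetSum c.support fun z _ => (hlim z).const_mul ‖c z‖
  exact norm_le_zero_iff.mp (ge_of_tendsto' hzero hbound)

end Characters

section TaylorExpansions

open Filter Topology

variable {ι R K : Type*} [Fintype ι] [CommRing R] [NormedField K]

theorem mpow_eq_monomialChar (St : Setting ι R K) (z : R) (i : ι → ℕ) :
    mpow St z i = monomialChar St.emb i z :=
  (monomialChar_apply St.emb i z).symm

theorem Setting.one_le_q (St : Setting ι R K) : 1 ≤ St.q := by
  rw [St.hq]
  exact one_le_pow₀ (mod_cast St.hp.one_le)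

theorem norm_mpow_uniformizer_pow (St : Setting ι R K) (h : ℕ) (i : ι → ℕ) :
    ‖mpow St (St.ϖ ^ h) i‖ = (St.q ^ (h * wt i))⁻¹ := by
  simp only [mpow, wt, norm_prod, norm_pow, map_pow, St.norm_emb, St.ν_ϖ,
    Finset.prod_pow_eq_pow_sum, ← inv_pow, pow_mul]

theorem one_le_norm_mpow_mul_rpow (St : Setting ι R K) {r : ℝ} {i : ι → ℕ} (hi : wt i ≤ r)
    (h : ℕ) : 1 ≤ ‖mpow St (St.ϖ ^ h) i‖ * St.q ^ (r * h) := by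
  have hq : 0 < St.q := one_pos.trans_le St.one_le_q
  rw [norm_mpow_uniformizer_pow, inv_mul_eq_div, one_le_div (by positivity), ← Real.rpow_natCast]
  refine Real.rpow_le_rpow_of_exponent_le St.one_le_q ?_
  rw [Nat.cast_mul, mul_comm r]
  gcongr

theorem mfact_ne_zero (i : ι → ℕ) : mfact i ≠ 0 :=
  Finset.prod_ne_zero_iff.mpr fun s _ => (i s).factorial_ne_zero

variable [DecidableEq ι]

theorem wt_le_of_mem_idx {N : ℕ} {i : ι → ℕ} (hi : i ∈ Idx ι N) : wt i ≤ N :=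
  (Finset.mem_filter.mp hi).2

theorem epsTay_sub_epsTay (St : Setting ι R K) (N : ℕ) (f : R → K) (F G : (ι → ℕ) → R → K)
    (x y : R) : epsTay St N f G x y - epsTay St N f F x y =
      ∑ i ∈ Idx ι N, (F i x - G i x) / (mfact i : K) * monomialChar St.emb i y := by
  simp only [epsTay, mpow_eq_monomialChar]
  rw [sub_sub_sub_cancel_left, ← Finset.sum_sub_distrib]
  exact Finset.sum_congr rfl fun i _ => by ring

theorem IsCrWith.tendsto_epsTay {St : Setting ι R K} {r : ℝ} {f : R → K}
    {D : (ι → ℕ) → R → K} (hD : IsCrWith St r f D) (x z : R) :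
    Tendsto (fun h : ℕ => ‖epsTay St ⌊r⌋₊ f D x (St.ϖ ^ h * z)‖ * St.q ^ (r * h))
      atTop (𝓝 0) := by
  have hq : 0 ≤ St.q := zero_le_one.trans St.one_le_q
  refine Metric.nhds_basis_closedBall.tendsto_right_iff.mpr fun ε hε => ?_
  obtain ⟨m, hm⟩ := hD.2 ε hε
  filter_upwards [eventually_ge_atTop m] with h hh
  rw [mem_closedBall_zero_iff, Real.norm_of_nonneg (by positivity)]
  exact hm h hh x z

theorem statement0_general [CharZero K] (St : Setting ι R K) {N : ℕ} {r : ℝ} (hN : N ≤ r)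
    {f : R → K} {F G : (ι → ℕ) → R → K} {x : R}
    (hF : ∀ z, Tendsto (fun h : ℕ => ‖epsTay St N f F x (St.ϖ ^ h * z)‖ * St.q ^ (r * h))
      atTop (𝓝 0))
    (hG : ∀ z, Tendsto (fun h : ℕ => ‖epsTay St N f G x (St.ϖ ^ h * z)‖ * St.q ^ (r * h))
      atTop (𝓝 0)) :
    ∀ i ∈ Idx ι N, F i x = G i x := by
  intro i hi
  have hq : 0 ≤ St.q := zero_le_one.trans St.one_le_q
  have hwt : (wt i : ℝ) ≤ r := le_trans (mod_cast wt_le_of_mem_idx hi) hN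
  have hlim : ∀ z, Tendsto (fun h : ℕ => ‖∑ i ∈ Idx ι N,
      (F i x - G i x) / (mfact i : K) * monomialChar St.emb i (St.ϖ ^ h * z)‖ * St.q ^ (r * h))
      atTop (𝓝 0) := by
    intro z
    refine squeeze_zero (fun h => by positivity) (fun h => ?_) (by simpa using (hG z).add (hF z))
    rw [← epsTay_sub_epsTay, ← add_mul]
    exact mul_le_mul_of_nonneg_right (norm_sub_le _ _) (by positivity)
  have hcoeff := eq_zero_of_tendsto_norm_sum_char (monomialChar_injective St.emb_distinct) hlim hi
    fun h => mpow_eq_monomialChar St _ i ▸ one_le_norm_mpow_mul_rpow St hwt h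
  exact sub_eq_zero.mp <|
    (div_eq_zero_iff.mp hcoeff).resolve_right (Nat.cast_ne_zero.mpr (mfact_ne_zero i))

end TaylorExpansions

/-- uniqueness of the family `(D_i f)_{i ∈ I_{≤[r]}}` attached to a function of
class `C^r`. -/
theorem statement0 (St : Setting S O E) (r : ℝ) (hr : 0 ≤ r) (f : O → E)
    (F G : (S → ℕ) → O → E)
    (hF : IsCrWith St r f F) (hG : IsCrWith St r f G) :
    ∀ i ∈ Idx S ⌊r⌋₊, F i = G i := by
  exact fun i hi => funext fun x =>
    statement0_general St (Nat.floor_le hr) (hF.tendsto_epsTay x) (hG.tendsto_epsTay x) i hi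

end CrPaper
end
end

section
/- Let f : 𝒪_F → E be a function of class C^r. Then f is of class C^l for every real l with 0 ≤ l ≤ r. -/
/-!
Setting (cf. the paper's notations): `O` plays the role of the ring of integers `𝒪_F` of a
finite extension `F` of `ℚ_p`, `E` is the coefficient field (a finite extension of `ℚ_p`
with its p-adic absolute value, normalized by `|x| = p^{-val_F(x)}`, `val_F(p) = [F:ℚ_p]`),
`S` is the (finite) set of `ℚ_p`-algebra embeddings `F ↪ E`, restricted here to `O`,
`ν : O → ℝ` is the absolute value on `O` (the common restriction of the norm of `E` along any
embedding), `ϖ` is a fixed uniformizer with `ν ϖ = q⁻¹` where `q = p^f` is the cardinality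
of the residue field, and `u * ϖ ^ e = p` records the ramification index `e`.
-/

open scoped Classical

noncomputable section

namespace CrPaper

variable {S O E : Type*} [Fintype S] [DecidableEq S] [CommRing O] [IsDomain O]
  [NormedField E] [CompleteSpace E] [CharZero E]

/-!
Keep the same family `D`. Lowering the exponent from `r` to `l` only moves the terms
`D_i f(x) y^i / i!` with `⌊l⌋ < |i| ≤ ⌊r⌋` into the Taylor remainder. As `D_i f` is bounded and
`|y^i| = |y|^|i|`, each of them is `O(|y|^|i|)`, hence `o(|y|^l)` because `l < ⌊l⌋ + 1 ≤ |i|`.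
-/

section Remainder

open Asymptotics Filter

omit [DecidableEq S] [IsDomain O] [CompleteSpace E] [CharZero E]

theorem isLittleO_rpow_neg_mul_natCast {q l k : ℝ} (hq : 1 < q) (hlk : l < k) :
    (fun h : ℕ => q ^ (-(k * h))) =o[atTop] fun h : ℕ => q ^ (-(l * h)) := by
  have hq0 : 0 ≤ q := zero_le_one.trans hq.le
  have hlt : q ^ (-k) < q ^ (-l) := Real.rpow_lt_rpow_of_exponent_lt hq (neg_lt_neg hlk)
  simpa only [← neg_mul, Real.rpow_mul_natCast hq0] using
    isLittleO_pow_pow_of_lt_left (Real.rpow_nonneg hq0 _) hlt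

theorem mem_Idx [DecidableEq S] {N : ℕ} {i : S → ℕ} : i ∈ Idx S N ↔ wt i ≤ N := by
  simp only [Idx, Finset.mem_filter, Fintype.mem_piFinset, Finset.mem_range, Nat.lt_succ_iff,
    and_iff_right_iff_imp]
  exact fun hi s => (Finset.single_le_sum_of_canonicallyOrdered (Finset.mem_univ s)).trans hi

theorem Idx_subset_Idx [DecidableEq S] {M N : ℕ} (h : M ≤ N) : Idx S M ⊆ Idx S N :=
  fun _ hi => mem_Idx.2 ((mem_Idx.1 hi).trans h)

theorem epsTay_eq_add_sum_sdiff [DecidableEq S] (St : Setting S O E) {M N : ℕ} (h : M ≤ N)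
    (f : O → E) (D : (S → ℕ) → O → E) (x y : O) :
    epsTay St M f D x y = epsTay St N f D x y +
      ∑ i ∈ Idx S N \ Idx S M, D i x * mpow St y i / (mfact i : E) := by
  rw [epsTay, epsTay, ← Finset.sum_sdiff (Idx_subset_Idx h)]
  ring

theorem Setting.one_lt_q (St : Setting S O E) : 1 < St.q := by
  rw [St.hq]
  exact one_lt_pow₀ (by exact_mod_cast St.hp.one_lt) St.hfdeg.ne'

theorem Setting.q_pos (St : Setting S O E) : 0 < St.q :=
  one_pos.trans St.one_lt_q

theorem norm_mpow_le (St : Setting S O E) {z : O} {c : ℝ} (hz : St.ν z ≤ c) (i : S → ℕ) :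
    ‖mpow St z i‖ ≤ c ^ wt i := by
  rw [mpow, norm_prod, wt, ← Finset.prod_pow_eq_pow_sum]
  refine Finset.prod_le_prod (fun _ _ => norm_nonneg _) fun s _ => ?_
  rw [norm_pow]
  exact pow_le_pow_left₀ (norm_nonneg _) ((St.norm_emb s z).trans_le hz) _

/-- `ε(x, y) = o(|y|^r)` uniformly in `x` as `y → 0`, the condition that `C^r` imposes on the
Taylor remainder. As in the definition of `C_{f,r}(h)`, one writes `y = ϖ^h z` and compares with
`q^{-rh}`, uniformly in `x` and `z`, as `h → ∞`. -/
def IsUniformLittleO (St : Setting S O E) (r : ℝ) (ε : O → O → E) : Prop :=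
  (fun a : ℕ × O × O => ε a.2.1 (St.ϖ ^ a.1 * a.2.2)) =o[atTop ×ˢ ⊤]
    fun a => St.q ^ (-(r * a.1))

theorem isUniformLittleO_iff {St : Setting S O E} {r : ℝ} {ε : O → O → E} :
    IsUniformLittleO St r ε ↔ ∀ δ : ℝ, 0 < δ → ∃ M : ℕ, ∀ h : ℕ, M ≤ h → ∀ x z : O,
      ‖ε x (St.ϖ ^ h * z)‖ * St.q ^ (r * (h : ℝ)) ≤ δ := by
  simp only [IsUniformLittleO, isLittleO_iff, ← principal_univ, eventually_prod_principal_iff,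
    eventually_atTop, Set.mem_univ, forall_const, Prod.forall, Real.rpow_neg St.q_pos.le,
    Real.norm_of_nonneg (inv_nonneg.2 (Real.rpow_nonneg St.q_pos.le _)), ← div_eq_mul_inv,
    le_div_iff₀ (Real.rpow_pos_of_pos St.q_pos _)]

theorem isCrWith_iff [DecidableEq S] {St : Setting S O E} {r : ℝ} {f : O → E}
    {D : (S → ℕ) → O → E} :
    IsCrWith St r f D ↔ (∀ i ∈ Idx S ⌊r⌋₊, ∃ C : ℝ, ∀ x : O, ‖D i x‖ ≤ C) ∧
      IsUniformLittleO St r (epsTay St ⌊r⌋₊ f D) :=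
  and_congr_right' isUniformLittleO_iff.symm

theorem IsUniformLittleO.mono {St : Setting S O E} {l r : ℝ} {ε : O → O → E}
    (hε : IsUniformLittleO St r ε) (hlr : l ≤ r) : IsUniformLittleO St l ε := by
  obtain rfl | hlt := hlr.eq_or_lt
  · exact hε
  · exact hε.trans ((isLittleO_rpow_neg_mul_natCast St.one_lt_q hlt).comp_tendsto tendsto_fst)

theorem isUniformLittleO_mul_mpow_div (St : Setting S O E) {l : ℝ} {c : O → E}
    (hc : ∃ C : ℝ, ∀ x, ‖c x‖ ≤ C) {i : S → ℕ} (hi : l < wt i) (m : E) :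
    IsUniformLittleO St l fun x y => c x * mpow St y i / m := by
  obtain ⟨C, hC⟩ := hc
  have hbound (a : ℕ × O × O) :
      ‖c a.2.1 * mpow St (St.ϖ ^ a.1 * a.2.2) i / m‖ ≤
        C / ‖m‖ * ‖St.q ^ (-(wt i * a.1 : ℝ))‖ := by
    have hν : St.ν (St.ϖ ^ a.1 * a.2.2) ≤ St.q⁻¹ ^ a.1 := (St.mem_ball_iff _ _).1 ⟨_, rfl⟩
    have hq : (St.q⁻¹ ^ a.1) ^ wt i = St.q ^ (-(wt i * a.1 : ℝ)) := by
      rw [← pow_mul', inv_pow, Real.rpow_neg St.q_pos.le, ← Nat.cast_mul, Real.rpow_natCast]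
    rw [norm_div, norm_mul, Real.norm_of_nonneg (Real.rpow_nonneg St.q_pos.le _), ← hq,
      div_mul_eq_mul_div]
    gcongr
    · exact (norm_nonneg _).trans (hC a.2.1)
    · exact hC _
    · exact norm_mpow_le St hν i
  exact (IsBigO.of_bound _ (.of_forall hbound)).trans_isLittleO
    ((isLittleO_rpow_neg_mul_natCast St.one_lt_q hi).comp_tendsto tendsto_fst)

theorem statement1_general [DecidableEq S] (St : Setting S O E) {r : ℝ} {f : O → E}
    {D : (S → ℕ) → O → E} (hf : IsCrWith St r f D) :
    ∀ l : ℝ, 0 ≤ l → l ≤ r → IsCrWith St l f D := by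
  intro l _ hlr
  obtain ⟨hD, hε⟩ := isCrWith_iff.1 hf
  have hfloor : ⌊l⌋₊ ≤ ⌊r⌋₊ := Nat.floor_le_floor hlr
  have hterm : ∀ i ∈ Idx S ⌊r⌋₊ \ Idx S ⌊l⌋₊,
      IsUniformLittleO St l fun x y => D i x * mpow St y i / (mfact i : E) := fun i hi => by
    rw [Finset.mem_sdiff, mem_Idx (N := ⌊l⌋₊), not_le] at hi
    exact isUniformLittleO_mul_mpow_div St (hD i hi.1) (Nat.lt_of_floor_lt hi.2) _
  refine isCrWith_iff.2 ⟨fun i hi => hD i (Idx_subset_Idx hfloor hi), ?_⟩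
  simpa only [IsUniformLittleO, ← epsTay_eq_add_sum_sdiff St hfloor f D] using
    (hε.mono hlr).add (IsLittleO.fun_sum hterm)

end Remainder

/-- a function of class `C^r` is of class `C^l` for every real `0 ≤ l ≤ r`. -/
theorem statement1 (St : Setting S O E) (r : ℝ) (hr : 0 ≤ r) (f : O → E)
    (hf : IsCr St r f) :
    ∀ l : ℝ, 0 ≤ l → l ≤ r → IsCr St l f := by
  obtain ⟨D, hD⟩ := hf
  exact fun l hl hlr => ⟨D, statement1_general St hD l hl hlr⟩

end CrPaper
end
end
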